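/- Let (v,w) be the improving switch that Bland(𝔅_n, π_0, 𝒩_{𝔅_n}) applies to a policy π that it visits, let π' be the twin policy of π, and let π̄' be the policy for 𝔇_n obtained from π' by applying the switches (x_{v,w}, y_{v,w}) and then (v, x_{v,w}). Then the edge (x_{v,π(v)}, v) is an improving switch for π̄', and in every run of policy iteration on 𝔇_n starting at π̄', the edge (x_{v,π(v)}, v) remains an improving switch at every step until it is applied or until an improving switch of the form (x_{u,·}, y_{u,·}) with 𝒩_V(u) > 𝒩_V(v) is applied. -/

import Mathlib

/-! ## The Markov decision process `𝔅_n` -/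

/-- Vertices of the MDP `𝔅_n`: a transportation vertex `t`, a sink `s`, a dummy vertex `d`,
and vertices `a i`, `b i` for `i ∈ {1,…,n}`. -/
inductive BV : Type where
  | t : BV
  | s : BV
  | d : BV
  | a : ℕ → BV
  | b : ℕ → BV
deriving DecidableEq

/-- The vertex `a i` for `i ∈ {1,…,n+1}`, with the convention `a (n+1) = s`. -/
def aN (n i : ℕ) : BV := if i = n + 1 then BV.s else BV.a i

/-- The vertex `b i` for `i ∈ {1,…,n+1}`, with the convention `b (n+1) = d`. -/
def bN (n i : ℕ) : BV := if i = n + 1 then BV.d else BV.b i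

/-- The vertex set of `𝔅_n`. -/
def IsBVertex (n : ℕ) : BV → Prop
  | BV.t => True
  | BV.s => True
  | BV.d => True
  | BV.a i => 1 ≤ i ∧ i ≤ n
  | BV.b i => 1 ≤ i ∧ i ≤ n

/-- The edge relation of `𝔅_n`: travel, enter, skip, board, stay, leave edges,
the edge `(d,s)` and the self-loop `(s,s)`. -/
def BEdge (n : ℕ) (u v : BV) : Prop :=
  (∃ i, 1 ≤ i ∧ i ≤ n ∧ u = BV.t ∧ v = BV.a i) ∨
  (∃ i, 1 ≤ i ∧ i ≤ n ∧ u = BV.a i ∧ v = BV.b i) ∨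
  (∃ i, 1 ≤ i ∧ i ≤ n ∧ u = BV.a i ∧ v = aN n (i + 1)) ∨
  (∃ i, 1 ≤ i ∧ i ≤ n ∧ u = BV.a i ∧ v = BV.t) ∨
  (∃ i, 1 ≤ i ∧ i ≤ n ∧ u = BV.b i ∧ v = bN n (i + 1)) ∨
  (∃ i, 1 ≤ i ∧ i ≤ n ∧ u = BV.b i ∧ v = aN n (i + 1)) ∨
  (u = BV.d ∧ v = BV.s) ∨ (u = BV.s ∧ v = BV.s)

/-- The reward function of `𝔅_n`: `r(enter i) = 2^i`, `r(stay i) = 3/4`,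
`r(board i) = -2^i + 5/4`, and reward `0` on all other edges. -/
def rB (n : ℕ) (u v : BV) : ℚ :=
  match u, v with
  | BV.a i, BV.b j => if i = j then 2 ^ i else 0
  | BV.a i, BV.t => -(2 ^ i) + 5 / 4
  | BV.b i, BV.b j => if j = i + 1 then 3 / 4 else 0
  | BV.b i, BV.d => if i = n then 3 / 4 else 0
  | _, _ => 0

/-- A policy for `𝔅_n` chooses an outgoing edge at every vertex. -/
def IsBPolicy (n : ℕ) (π : BV → BV) : Prop := ∀ u, IsBVertex n u → BEdge n u (π u)

/-- A policy is weak unichain if it reaches the sink `s` from every vertex. -/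
def BWeakUnichain (n : ℕ) (π : BV → BV) : Prop :=
  ∀ u, IsBVertex n u → ∃ k, π^[k] u = BV.s

open Classical in
/-- The value of a vertex `v` w.r.t. a (weak unichain) policy `π`:
the sum of the rewards along the path that `π` takes from `v` to the sink `s`. -/
noncomputable def BVal (n : ℕ) (π : BV → BV) (v : BV) : ℚ :=
  if h : ∃ k, π^[k] v = BV.s then
    ∑ i ∈ Finset.range (Nat.find h), rB n (π^[i] v) (π^[i + 1] v)
  else 0

/-- The reduced costs of the edge `(u,v)` w.r.t. the policy `π`. -/
noncomputable def zB (n : ℕ) (π : BV → BV) (u v : BV) : ℚ :=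
  rB n u v + BVal n π v - BVal n π u

/-- The edge `(u,v)` is an improving switch for `π` if its reduced costs are positive. -/
def BImproving (n : ℕ) (π : BV → BV) (u v : BV) : Prop :=
  BEdge n u v ∧ 0 < zB n π u v

/-- The Bland numbering `𝒩_{𝔅_n}` of the edges of `𝔅_n`. -/
def NB (n : ℕ) (u v : BV) : ℕ :=
  match u, v with
  | BV.t, BV.a i => i
  | BV.a i, BV.b _ => n + 1 + 5 * (i - 1)
  | BV.a i, BV.a _ => n + 2 + 5 * (i - 1)
  | BV.a i, BV.s => n + 2 + 5 * (i - 1)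
  | BV.a i, BV.t => n + 3 + 5 * (i - 1)
  | BV.b i, BV.b _ => n + 4 + 5 * (i - 1)
  | BV.b i, BV.d => n + 4 + 5 * (i - 1)
  | BV.b i, BV.a _ => n + 5 + 5 * (i - 1)
  | BV.b i, BV.s => n + 5 + 5 * (i - 1)
  | BV.d, BV.s => 6 * n + 1
  | BV.s, BV.s => 6 * n + 2
  | _, _ => 0

/-- One step of Bland's policy iteration with edge numbering `N`:
apply the improving switch with the smallest number. -/
def IsBlandStep (n : ℕ) (N : BV → BV → ℕ) (π π' : BV → BV) : Prop :=
  ∃ u v, BImproving n π u v ∧ (∀ u' v', BImproving n π u' v' → N u v ≤ N u' v') ∧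
    π' = Function.update π u v

/-- `BlandReaches n N π ψ` says that Bland's policy iteration started at `π` visits `ψ`. -/
def BlandReaches (n : ℕ) (N : BV → BV → ℕ) : (BV → BV) → (BV → BV) → Prop :=
  Relation.ReflTransGen (IsBlandStep n N)

/-- The canonical policy `π_0` for `0`: `travel 1`, `skip i` and `leave i` are active. -/
def pi0 (n : ℕ) : BV → BV := fun u =>
  match u with
  | BV.t => BV.a 1
  | BV.a i => aN n (i + 1)
  | BV.b i => aN n (i + 1)
  | BV.d => BV.s
  | BV.s => BV.s

/-- The optimal policy `π_*`: `travel 1`, `enter i` for all `i`, `leave j` for `j < n`,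
and `stay n` are active. -/
def piStar (n : ℕ) : BV → BV := fun u =>
  match u with
  | BV.t => BV.a 1
  | BV.a i => BV.b i
  | BV.b i => if i = n then BV.d else BV.a (i + 1)
  | BV.d => BV.s
  | BV.s => BV.s

/-! ## Bits and canonical policies -/

/-- The least significant set bit `ℓ_1(x)` (1-based). -/
noncomputable def lsb (x : ℕ) : ℕ := sInf {i | 1 ≤ i ∧ Nat.testBit x (i - 1)}

/-- The most significant set bit `m(x)` (1-based). -/
noncomputable def msb1 (x : ℕ) : ℕ := sSup {i | 1 ≤ i ∧ Nat.testBit x (i - 1)}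

/-- The least unset bit `ℓ_0(x)` (1-based). -/
noncomputable def lzero (x : ℕ) : ℕ := sInf {i | 1 ≤ i ∧ ¬ Nat.testBit x (i - 1)}

/-- `L_i(x) = max { j ≤ i-2 | x_j = 1 or j = 1 }` (1-based bits). -/
noncomputable def Lfun (i x : ℕ) : ℕ :=
  sSup {j | 1 ≤ j ∧ j ≤ i - 2 ∧ (Nat.testBit x (j - 1) ∨ j = 1)}

/-- `IsCanonical n x π` says that `π` is the canonical policy `π_x` for `x`. -/
noncomputable def IsCanonical (n x : ℕ) (π : BV → BV) : Prop :=
  IsBPolicy n π ∧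
  if x = 0 then
    π BV.t = BV.a 1 ∧
      ∀ i, 1 ≤ i → i ≤ n → π (BV.a i) = aN n (i + 1) ∧ π (BV.b i) = aN n (i + 1)
  else
    π BV.t = BV.a (lsb x) ∧
    π (BV.b (msb1 x)) = aN n (msb1 x + 1) ∧
    (∀ i, msb1 x < i → i ≤ n → π (BV.a i) = aN n (i + 1) ∧ π (BV.b i) = aN n (i + 1)) ∧
    ∀ i, 1 ≤ i → i ≤ n → Nat.testBit x (i - 1) →
      π (BV.a i) = BV.b i ∧
      (i = 2 → π (BV.b 1) = BV.a 2 ∧ (¬ Nat.testBit x 0 → π (BV.a 1) = BV.a 2)) ∧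
      (3 ≤ i → Nat.testBit x (i - 2) → π (BV.b (i - 1)) = BV.a i) ∧
      (3 ≤ i → ¬ Nat.testBit x (i - 2) →
        π (BV.b (i - 1)) = BV.b i ∧ π (BV.a (i - 1)) = BV.a i ∧
        π (BV.b (i - 2)) = BV.a (i - 1) ∧
        (Lfun i x < i - 2 →
          ∀ j, Lfun i x + 1 ≤ j → j ≤ i - 2 →
            π (BV.a j) = BV.t ∧ π (BV.b (j - 1)) = BV.b j) ∧
        (Lfun i x = 1 → ¬ Nat.testBit x 0 → π (BV.a 1) = BV.t))

/-- Activating a list of edges in a policy, from left to right. -/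
def activateList (π : BV → BV) (L : List (BV × BV)) : BV → BV :=
  L.foldl (fun σ e => Function.update σ e.1 e.2) π

/-- The canonical phases w.r.t. an odd number `x` (with `ℓ := ℓ_0(x)`), as a list of edges
to be activated in order. -/
noncomputable def phaseList (n x : ℕ) : List (BV × BV) :=
  let ℓ := lzero x
  (if Nat.testBit x ℓ then [(BV.b ℓ, aN n (ℓ + 1))] else []) ++
  (if Nat.testBit x ℓ ∨ msb1 x < ℓ then [(BV.b (ℓ - 1), BV.b ℓ)] else []) ++
  [(BV.a ℓ, BV.b ℓ), (BV.t, BV.a ℓ)] ++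
  ((List.range (ℓ - 2)).map fun j => (BV.a (j + 1), BV.t)) ++
  [(BV.a (ℓ - 1), BV.a ℓ)] ++
  (((List.range (ℓ - 3)).reverse).map fun j => (BV.b (j + 1), BV.b (j + 2))) ++
  (if ℓ = 2 then [(BV.b 1, BV.a 2)] else [])

/-! ## The Markov decision process `𝔇_n` -/

/-- Vertices of `𝔇_n`: the original vertices (`base`), and for every edge `(v,w)` of `𝔅_n`
other than the self-loop, the gadget vertices `x v w`, `y v w`, `z v w`. -/
inductive DV : Type where
  | base : BV → DV
  | x : BV → BV → DV
  | y : BV → BV → DV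
  | z : BV → BV → DV
deriving DecidableEq

/-- The edges of `𝔅_n` that get replaced by gadgets (all edges except the self-loop `(s,s)`). -/
def DEdgePair (n : ℕ) (v w : BV) : Prop := BEdge n v w ∧ v ≠ BV.s

/-- The vertex set of `𝔇_n`. -/
def IsDVertex (n : ℕ) : DV → Prop
  | DV.base v => IsBVertex n v
  | DV.x v w => DEdgePair n v w
  | DV.y v w => DEdgePair n v w
  | DV.z v w => DEdgePair n v w

/-- The agent vertices of `𝔇_n` (all vertices except the randomization vertices `y v w`). -/
def IsDAgent (n : ℕ) : DV → Prop
  | DV.base v => IsBVertex n v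
  | DV.x v w => DEdgePair n v w
  | DV.y _ _ => False
  | DV.z v w => DEdgePair n v w

/-- The agent edges of `𝔇_n`. -/
def DEdge (n : ℕ) (u u' : DV) : Prop :=
  (∃ v w, DEdgePair n v w ∧
    ((u = DV.base v ∧ u' = DV.x v w) ∨ (u = DV.x v w ∧ u' = DV.base v) ∨
     (u = DV.x v w ∧ u' = DV.y v w) ∨ (u = DV.z v w ∧ u' = DV.base w))) ∨
  (u = DV.base BV.s ∧ u' = DV.base BV.s)

/-- The reward function of `𝔇_n`: the edge `(z v w, w)` carries the reward of the original
edge `(v,w)`; all other agent edges have reward `0`. -/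
def rD (n : ℕ) (u u' : DV) : ℚ :=
  match u, u' with
  | DV.z v w, DV.base w' => if w' = w then rB n v w else 0
  | _, _ => 0

/-- A policy for `𝔇_n` chooses an outgoing agent edge at every agent vertex. -/
def IsDPolicy (n : ℕ) (π : DV → DV) : Prop := ∀ u, IsDAgent n u → DEdge n u (π u)

/-- `IsDVal n p π V` says that `V` satisfies the Bellman equations characterizing the value
function of the policy `π` for `𝔇_n` with probabilities `p`, with `V s = 0`. -/
def IsDVal (n : ℕ) (p : BV → ℚ) (π : DV → DV) (V : DV → ℚ) : Prop :=
  V (DV.base BV.s) = 0 ∧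
  (∀ u, IsDAgent n u → V u = rD n u (π u) + V (π u)) ∧
  (∀ v w, DEdgePair n v w →
    V (DV.y v w) = p v * V (DV.z v w) + (1 - p v) * V (DV.base v))

open Classical in
/-- The value function of a (weak unichain) policy `π` for `𝔇_n`: the unique solution of the
Bellman equations (normalized to `0` outside the vertex set). -/
noncomputable def DVal (n : ℕ) (p : BV → ℚ) (π : DV → DV) : DV → ℚ :=
  if h : ∃! V : DV → ℚ, IsDVal n p π V ∧ ∀ u, ¬ IsDVertex n u → V u = 0 then
    h.exists.choose
  else fun _ => 0

/-- The reduced costs of an agent edge `(u,u')` of `𝔇_n` w.r.t. the policy `π`. -/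
noncomputable def zD (n : ℕ) (p : BV → ℚ) (π : DV → DV) (u u' : DV) : ℚ :=
  rD n u u' + DVal n p π u' - DVal n p π u

/-- An agent edge of `𝔇_n` is an improving switch if its reduced costs are positive. -/
def DImproving (n : ℕ) (p : BV → ℚ) (π : DV → DV) (u u' : DV) : Prop :=
  DEdge n u u' ∧ 0 < zD n p π u u'

/-- One (agent or positive-probability randomization) step of the process `𝔇_n` under `π`. -/
def DStep (n : ℕ) (p : BV → ℚ) (π : DV → DV) (u u' : DV) : Prop :=
  (IsDAgent n u ∧ u' = π u) ∨
  (∃ v w, DEdgePair n v w ∧ u = DV.y v w ∧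
    ((u' = DV.z v w ∧ 0 < p v) ∨ (u' = DV.base v ∧ 0 < 1 - p v)))

/-- A policy for `𝔇_n` is weak unichain if it reaches `s` with probability one from every
vertex, i.e. `s` is reachable via active/positive-probability steps from every vertex. -/
def DWeakUnichain (n : ℕ) (p : BV → ℚ) (π : DV → DV) : Prop :=
  ∀ u, IsDVertex n u → Relation.ReflTransGen (DStep n p π) u (DV.base BV.s)

/-- The twin policy of a policy `π` for `𝔅_n`: every vertex `v ≠ s` is `π v`-oriented. -/
def twin (π : BV → BV) : DV → DV := fun u =>
  match u with
  | DV.base v => if v = BV.s then DV.base BV.s else DV.x v (π v)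
  | DV.x v w => if w = π v then DV.y v w else DV.base v
  | DV.y v w => DV.y v w
  | DV.z _ w => DV.base w

/-- The vertex numbering `𝒩_V` of `𝔅_n`: the order `(t, a 1, b 1, a 2, b 2, …, a n, b n, d, s)`. -/
def NV (n : ℕ) : BV → ℕ
  | BV.t => 1
  | BV.a i => 2 * i
  | BV.b i => 2 * i + 1
  | BV.d => 2 * n + 2
  | BV.s => 2 * n + 3

/-- The specific probabilities `p_v = 2^{-𝒩_V(v)·(n+5)}`. -/
noncomputable def pSpec (n : ℕ) (v : BV) : ℚ := (2 : ℚ) ^ (-((NV n v * (n + 5) : ℕ) : ℤ))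

/-- The set `B(v)` of agent edges of `𝔇_n` belonging to the vertex `v`. -/
def Belongs (n : ℕ) (v : BV) (e : DV × DV) : Prop :=
  ∃ w, DEdgePair n v w ∧
    (e = (DV.x v w, DV.y v w) ∨ e = (DV.base v, DV.x v w) ∨ e = (DV.x v w, DV.base v))

/-- Applying the improving switch `e` to the policy `π` yields `π'`. -/
def DApply (n : ℕ) (p : BV → ℚ) (π : DV → DV) (e : DV × DV) (π' : DV → DV) : Prop :=
  DImproving n p π e.1 e.2 ∧ π' = Function.update π e.1 e.2

/-- One step of Bland's policy iteration on `𝔇_n` with edge numbering `N`. -/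
def IsBlandStepD (n : ℕ) (p : BV → ℚ) (N : DV → DV → ℕ) (π π' : DV → DV) : Prop :=
  ∃ u u', DImproving n p π u u' ∧ (∀ a b, DImproving n p π a b → N u u' ≤ N a b) ∧
    π' = Function.update π u u'

/-- One step of Dantzig's policy iteration on `𝔇_n`: apply an improving switch of maximal
reduced costs. -/
def DantzigStep (n : ℕ) (p : BV → ℚ) (π π' : DV → DV) : Prop :=
  ∃ u u', DImproving n p π u u' ∧
    (∀ a b, DImproving n p π a b → zD n p π a b ≤ zD n p π u u') ∧
    π' = Function.update π u u'

/-- The finite set of vertices of `𝔅_n`, as a `Finset`. -/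
noncomputable def BVSet (n : ℕ) : Finset BV :=
  {BV.t, BV.d, BV.s} ∪ (Finset.Icc 1 n).image BV.a ∪ (Finset.Icc 1 n).image BV.b

/-- The finite set of agent vertices of `𝔇_n`, as a `Finset`. -/
noncomputable def DAgentSet (n : ℕ) : Finset DV := by
  classical
  exact ((BVSet n).image DV.base) ∪
    (((BVSet n ×ˢ BVSet n).filter fun e => DEdgePair n e.1 e.2).image fun e => DV.x e.1 e.2) ∪
    (((BVSet n ×ˢ BVSet n).filter fun e => DEdgePair n e.1 e.2).image fun e => DV.z e.1 e.2)

/-- The objective of the Largest Increase rule: the sum of the values of all agent vertices. -/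
noncomputable def LIobj (n : ℕ) (p : BV → ℚ) (π : DV → DV) : ℚ :=
  ∑ u ∈ DAgentSet n, DVal n p π u

/-- One step of the Largest Increase policy iteration on `𝔇_n`: apply an improving switch
maximizing the sum of all agent vertex values of the resulting policy. -/
def LIStep (n : ℕ) (p : BV → ℚ) (π π' : DV → DV) : Prop :=
  ∃ u u', DImproving n p π u u' ∧
    (∀ a b, DImproving n p π a b →
      LIobj n p (Function.update π a b) ≤ LIobj n p (Function.update π u u')) ∧
    π' = Function.update π u u'

/-- `N` is a Bland numbering `𝒩_{𝔇_n}` for `𝔇_n`: it is injective on agent edges, the edges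
`(x v w, v)` all come first, within each gadget `(x v w, y v w)` precedes `(v, x v w)`,
the gadget blocks are ordered according to `𝒩_{𝔅_n}`, and the self-loop comes last. -/
def IsDBlandNumbering (n : ℕ) (N : DV → DV → ℕ) : Prop :=
  (∀ u₁ u₂ u₁' u₂', DEdge n u₁ u₂ → DEdge n u₁' u₂' → N u₁ u₂ = N u₁' u₂' →
    u₁ = u₁' ∧ u₂ = u₂') ∧
  (∀ v w v' w', DEdgePair n v w → DEdgePair n v' w' →
    N (DV.x v w) (DV.base v) < N (DV.x v' w') (DV.y v' w')) ∧
  (∀ v w, DEdgePair n v w → N (DV.x v w) (DV.y v w) < N (DV.base v) (DV.x v w)) ∧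
  (∀ v w v' w', DEdgePair n v w → DEdgePair n v' w' → NB n v w < NB n v' w' →
    N (DV.base v) (DV.x v w) < N (DV.x v' w') (DV.y v' w')) ∧
  (∀ v w, DEdgePair n v w → N (DV.base v) (DV.x v w) < N (DV.base BV.s) (DV.base BV.s))

/-!
Gadgets only slow the process down. As long as every vertex `u ≠ s` of `𝔅_n` enters a gadget that
it also traverses, the values at these vertices are those of the policy `φ` for `𝔅_n` that is read
off from the entered gadgets, and the reduced costs of entering or leaving a traversed gadget of
`(u,w)` are `± p_u` times those of `(u,w)` for `φ`. Values never decrease along a run, so `v` keeps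
at least the value to which the switch `(v,w)` has raised it. No further gadget of a vertex above
`v` gets traversed, so `φ` agrees with `π` above `v`. These two facts force `(v,π(v))` to have
negative reduced costs for `φ`, as follows.

Along every edge other than the self-loop the reward is less than the increase of a potential. If
the path of `π` from `v` avoids `t`, then it stays above `v` and is a path of `φ` from `π(v)` on.
Otherwise compare the value of `t` for `φ` with that of `v`, via the edge by which the path of `φ`
from `t` first gets to `v` or passes over it. If an edge `(u,q)` with `u ≠ t` passes over `v`, then
`(v,q)` is an edge, too, and Bland's rule makes `(v,w)` at least as good as `(v,q)`.
-/

/-! ### Edges of `𝔅_n` and a strict potential -/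

/-- The edges of `𝔅_n` by type, with the conventions `a (n+1) = s` and `b (n+1) = d` resolved,
so that case analysis on an edge determines its endpoints. -/
inductive BEdgeView (n : ℕ) : BV → BV → Prop
  | travel {i : ℕ} (h₁ : 1 ≤ i) (h₂ : i ≤ n) : BEdgeView n BV.t (BV.a i)
  | enter {i : ℕ} (h₁ : 1 ≤ i) (h₂ : i ≤ n) : BEdgeView n (BV.a i) (BV.b i)
  | skip {i : ℕ} (h₁ : 1 ≤ i) (h₂ : i < n) : BEdgeView n (BV.a i) (BV.a (i + 1))
  | skipLast (h₁ : 1 ≤ n) : BEdgeView n (BV.a n) BV.s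
  | board {i : ℕ} (h₁ : 1 ≤ i) (h₂ : i ≤ n) : BEdgeView n (BV.a i) BV.t
  | stay {i : ℕ} (h₁ : 1 ≤ i) (h₂ : i < n) : BEdgeView n (BV.b i) (BV.b (i + 1))
  | stayLast (h₁ : 1 ≤ n) : BEdgeView n (BV.b n) BV.d
  | leave {i : ℕ} (h₁ : 1 ≤ i) (h₂ : i < n) : BEdgeView n (BV.b i) (BV.a (i + 1))
  | leaveLast (h₁ : 1 ≤ n) : BEdgeView n (BV.b n) BV.s
  | dummy : BEdgeView n BV.d BV.s
  | loop : BEdgeView n BV.s BV.s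

/-- A potential whose increase along every edge of `𝔅_n` except the self-loop exceeds the reward
of the edge. Up to the correction terms `2⁻ⁱ`, which make all the inequalities strict, it is the
largest total reward that can be collected on the way from `t`. -/
def pot (n : ℕ) : BV → ℚ
  | BV.t => 0
  | BV.a i => 2 ^ i - 5 / 4 - (1 / 2) ^ i
  | BV.b i => 2 ^ (i + 1) - 5 / 4 - 3 / 4 * (1 / 2) ^ i
  | BV.d => 2 ^ (n + 1) - 1 / 2
  | BV.s => 2 ^ (n + 1)

section Edges

variable {n : ℕ} {u v w w' q : BV}

theorem BEdge.view (h : BEdge n u v) : BEdgeView n u v := by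
  rcases h with ⟨i, h₁, h₂, rfl, rfl⟩ | ⟨i, h₁, h₂, rfl, rfl⟩ | ⟨i, h₁, h₂, rfl, rfl⟩ |
    ⟨i, h₁, h₂, rfl, rfl⟩ | ⟨i, h₁, h₂, rfl, rfl⟩ | ⟨i, h₁, h₂, rfl, rfl⟩ | ⟨rfl, rfl⟩ | ⟨rfl, rfl⟩
  · exact .travel h₁ h₂
  · exact .enter h₁ h₂
  · rcases h₂.eq_or_lt with rfl | h₂
    · simpa [aN] using .skipLast h₁
    · simpa [aN, h₂.ne] using .skip h₁ h₂
  · exact .board h₁ h₂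
  · rcases h₂.eq_or_lt with rfl | h₂
    · simpa [bN] using .stayLast h₁
    · simpa [bN, h₂.ne] using .stay h₁ h₂
  · rcases h₂.eq_or_lt with rfl | h₂
    · simpa [aN] using .leaveLast h₁
    · simpa [aN, h₂.ne] using .leave h₁ h₂
  · exact .dummy
  · exact .loop

theorem BEdge.isBVertex_left (h : BEdge n u v) : IsBVertex n u := by
  cases h.view <;> simp only [IsBVertex] <;> omega

theorem BEdge.isBVertex_right (h : BEdge n u v) : IsBVertex n v := by
  cases h.view <;> simp only [IsBVertex] <;> omega

theorem BEdge.eq_s (h : BEdge n BV.s v) : v = BV.s := by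
  cases h.view
  rfl

theorem BEdge.NV_lt (h : BEdge n u v) (hu : u ≠ BV.s) (hv : v ≠ BV.t) : NV n u < NV n v := by
  cases h.view <;> first | contradiction | (simp only [NV]; omega)

theorem NV_inj (hu : IsBVertex n u) (hv : IsBVertex n v) (h : NV n u = NV n v) : u = v := by
  cases u <;> cases v <;> simp only [IsBVertex, NV, BV.a.injEq, BV.b.injEq, reduceCtorEq] at * <;>
    omega

theorem NV_lt_NV_s (hu : IsBVertex n u) (hs : u ≠ BV.s) : NV n u < NV n BV.s := by
  cases u <;> simp only [IsBVertex, NV, ne_eq, not_true_eq_false] at * <;> omega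

theorem BEdge.reward_add_pot_lt (h : BEdge n u v) (hu : u ≠ BV.s) :
    rB n u v + pot n u < pot n v := by
  have two_le {i : ℕ} (hi : 1 ≤ i) : (2 : ℚ) ≤ 2 ^ i := le_self_pow₀ one_le_two (by omega)
  have half_pow_pos (i : ℕ) : (0 : ℚ) < (1 / 2) ^ i := by positivity
  have half_pow_le {i : ℕ} (hi : 1 ≤ i) : ((1 : ℚ) / 2) ^ i ≤ 1 / 2 :=
    pow_le_of_le_one (by norm_num) (by norm_num) (by omega)
  cases h.view with
  | loop => contradiction
  | dummy => norm_num [rB, pot]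
  | _ h₁ =>
    have := two_le h₁
    have := half_pow_le h₁
    simp only [rB, pot, pow_succ, if_true]
    linarith [half_pow_pos n, half_pow_pos ‹_›]

theorem BEdge.edge_of_bypass (h : BEdge n u q) (hut : u ≠ BV.t) (hv : IsBVertex n v)
    (huv : NV n u < NV n v) (hvq : NV n v < NV n q) : BEdge n v q := by
  cases h.view <;> cases v <;> simp only [NV, IsBVertex] at * <;> try first | contradiction | omega
  case skip.b i _ _ j =>
    obtain rfl : j = i := by omega
    simp [BEdge, aN]; omega
  case skipLast.b j =>
    obtain rfl : j = n := by omega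
    simp [BEdge, aN]; omega
  case skipLast.d | leaveLast.d =>
    simp [BEdge]
  case stay.a i _ _ j =>
    obtain rfl : j = i + 1 := by omega
    simp [BEdge]; omega

theorem BEdge.reward_add_pot_le_of_bypass (h : BEdge n u q) (hut : u ≠ BV.t) (hv : IsBVertex n v)
    (huv : NV n u < NV n v) (hvq : NV n v < NV n q) :
    rB n u q + pot n u ≤ rB n v q + pot n v := by
  have half_pow_pos (i : ℕ) : 0 < ((1 : ℚ) / 2) ^ i := by positivity
  have one_le_two_pow (i : ℕ) : (1 : ℚ) ≤ 2 ^ i := one_le_pow₀ one_le_two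
  cases h.view <;> cases v <;> simp only [NV, IsBVertex] at * <;> try first | contradiction | omega
  case skip.b i _ _ j =>
    obtain rfl : j = i := by omega
    simp only [rB, pot, pow_succ]
    linarith [one_le_two_pow j, half_pow_pos j]
  case skipLast.b j =>
    obtain rfl : j = n := by omega
    simp only [rB, pot, pow_succ]
    linarith [one_le_two_pow j, half_pow_pos j]
  case skipLast.d | leaveLast.d =>
    simp only [rB, pot, pow_succ]
    linarith [one_le_two_pow n, half_pow_pos n]
  case stay.a i _ _ j =>
    obtain rfl : j = i + 1 := by omega
    simp only [rB, pot, pow_succ, if_true]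
    linarith [one_le_two_pow i, half_pow_pos i]

/-- Unless `v` has at most two out-edges, `(v,q)` is `enter`, the Bland-first edge at `v`. -/
theorem BEdge.NB_lt_of_bypass (h : BEdge n u q) (hut : u ≠ BV.t) (hv : BEdge n v w)
    (hv' : BEdge n v w') (hne : w ≠ w') (huv : NV n u < NV n v) (hvq : NV n v < NV n q) :
    q = w ∨ q = w' ∨ NB n v q < NB n v w := by
  cases h.view <;> cases hv.view <;> simp only [NV] at huv hvq <;>
    try first | contradiction | omega
  all_goals cases hv'.view <;> simp [NB] at * <;> try omega

end Edges

/-! ### Weak unichain policies for `𝔅_n` -/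

/-- Weak unichain policies for `𝔅_n`: maps that choose an edge of `𝔅_n` at every vertex and reach
the sink from every vertex. -/
structure IsUnichainPolicy (n : ℕ) (π : BV → BV) : Prop where
  isBPolicy : IsBPolicy n π
  reaches : BWeakUnichain n π

section UnichainPolicies

variable {n : ℕ} {π : BV → BV} {u v w : BV}

theorem IsBPolicy.update (hπ : IsBPolicy n π) (h : BEdge n v w) :
    IsBPolicy n (Function.update π v w) := by
  intro u hu
  rcases eq_or_ne u v with rfl | huv
  · rwa [Function.update_self]
  · rw [Function.update_of_ne huv]
    exact hπ u hu

/-- A vertex off the paths to `s` with maximal `V + pot` would be followed by another one where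
`V + pot` is larger. -/
theorem IsBPolicy.bWeakUnichain_of_le (hπ : IsBPolicy n π) (V : BV → ℚ)
    (hV : ∀ u, IsBVertex n u → V u ≤ rB n u (π u) + V (π u)) : BWeakUnichain n π := by
  have finite_vertices : {u | IsBVertex n u}.Finite := by
    refine (BVSet n).finite_toSet.subset fun u hu => ?_
    cases u <;> simp_all [IsBVertex, BVSet]
  by_contra hreach
  simp only [BWeakUnichain, not_forall, exists_prop] at hreach
  obtain ⟨u, ⟨hu, hus⟩, hmax⟩ := Set.exists_max_image
    {u | IsBVertex n u ∧ ¬ ∃ k, π^[k] u = BV.s} (fun u => V u + pot n u)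
    (finite_vertices.subset fun _ h => h.1) hreach
  have hus' : u ≠ BV.s := fun h => hus ⟨0, h⟩
  have hnext : ¬ ∃ k, π^[k] (π u) = BV.s := fun ⟨k, hk⟩ => hus ⟨k + 1, hk⟩
  have hle := hmax (π u) ⟨(hπ u hu).isBVertex_right, hnext⟩
  linarith [hV u hu, (hπ u hu).reward_add_pot_lt hus']

theorem BVal_s : BVal n π BV.s = 0 := by
  have h : ∃ k, π^[k] BV.s = BV.s := ⟨0, rfl⟩
  rw [BVal, dif_pos h, (Nat.find_eq_zero h).mpr rfl, Finset.sum_range_zero]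

namespace IsUnichainPolicy

theorem isBVertex (hπ : IsUnichainPolicy n π) (hu : IsBVertex n u) : IsBVertex n (π u) :=
  (hπ.isBPolicy u hu).isBVertex_right

theorem apply_s (hπ : IsUnichainPolicy n π) : π BV.s = BV.s :=
  (hπ.isBPolicy BV.s trivial).eq_s

@[elab_as_elim]
theorem induction {P : (u : BV) → IsBVertex n u → Prop} (hπ : IsUnichainPolicy n π)
    (sink : P BV.s trivial)
    (step : ∀ u (hu : IsBVertex n u), u ≠ BV.s → P (π u) (hπ.isBVertex hu) → P u hu)
    (u : BV) (hu : IsBVertex n u) : P u hu := by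
  obtain ⟨k, hk⟩ := hπ.reaches u hu
  induction k generalizing u with
  | zero =>
    obtain rfl : u = BV.s := hk
    exact sink
  | succ k ih =>
    rcases eq_or_ne u BV.s with rfl | hus
    · exact sink
    · exact step u hu hus (ih (π u) (hπ.isBVertex hu) hk)

theorem BVal_eq (hπ : IsUnichainPolicy n π) (hu : IsBVertex n u) :
    BVal n π u = rB n u (π u) + BVal n π (π u) := by
  rcases eq_or_ne u BV.s with rfl | hus
  · rw [hπ.apply_s, BVal_s]
    simp [rB]
  · have h := hπ.reaches u hu
    have h' := hπ.reaches (π u) (hπ.isBVertex hu)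
    rw [BVal, dif_pos h, BVal, dif_pos h', Nat.find_comp_succ h h' hus, Finset.sum_range_succ',
      add_comm]
    rfl

theorem zB_self (hπ : IsUnichainPolicy n π) (hu : IsBVertex n u) : zB n π u (π u) = 0 := by
  rw [zB, hπ.BVal_eq hu, sub_self]

theorem BVal_add_pot_lt (hπ : IsUnichainPolicy n π) (hu : IsBVertex n u) (hus : u ≠ BV.s) :
    BVal n π u + pot n u < BVal n π (π u) + pot n (π u) := by
  linarith [hπ.BVal_eq hu, (hπ.isBPolicy u hu).reward_add_pot_lt hus]

theorem le_BVal (hπ : IsUnichainPolicy n π) (V : BV → ℚ) (hs : V BV.s ≤ 0)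
    (hV : ∀ u, IsBVertex n u → V u ≤ rB n u (π u) + V (π u)) (hu : IsBVertex n u) :
    V u ≤ BVal n π u := by
  induction u, hu using hπ.induction with
  | sink => rwa [BVal_s]
  | step u hu _ ih => linarith [hV u hu, hπ.BVal_eq hu]

theorem BVal_le_reward_add_BVal (hπ : IsUnichainPolicy n π) (h : BImproving n π v w)
    (hu : IsBVertex n u) :
    BVal n π u ≤ rB n u (Function.update π v w u) + BVal n π (Function.update π v w u) := by
  rcases eq_or_ne u v with rfl | huv
  · rw [Function.update_self]
    linarith [h.2, zB.eq_def n π u w]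
  · rw [Function.update_of_ne huv]
    exact (hπ.BVal_eq hu).le

theorem update (hπ : IsUnichainPolicy n π) (h : BImproving n π v w) :
    IsUnichainPolicy n (Function.update π v w) where
  isBPolicy := hπ.isBPolicy.update h.1
  reaches := (hπ.isBPolicy.update h.1).bWeakUnichain_of_le _ fun _ => hπ.BVal_le_reward_add_BVal h

theorem BVal_le_BVal_update (hπ : IsUnichainPolicy n π) (h : BImproving n π v w)
    (hu : IsBVertex n u) : BVal n π u ≤ BVal n (Function.update π v w) u :=
  (hπ.update h).le_BVal _ BVal_s.le (fun _ => hπ.BVal_le_reward_add_BVal h) hu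

theorem BVal_add_zB_le_BVal_update (hπ : IsUnichainPolicy n π) (h : BImproving n π v w) :
    BVal n π v + zB n π v w ≤ BVal n (Function.update π v w) v := by
  rw [(hπ.update h).BVal_eq h.1.isBVertex_left, Function.update_self, zB]
  linarith [hπ.BVal_le_BVal_update h h.1.isBVertex_right]

theorem of_blandReaches {N : BV → BV → ℕ} {π' : BV → BV} (hπ : IsUnichainPolicy n π)
    (h : BlandReaches n N π π') : IsUnichainPolicy n π' := by
  induction h with
  | refl => exact hπ
  | tail _ hstep ih =>
    obtain ⟨u, v, himp, -, rfl⟩ := hstep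
    exact ih.update himp

end IsUnichainPolicy

theorem reward_pi0 : rB n u (pi0 n u) = 0 := by
  cases u with
  | a | b => simp only [pi0, aN]; split_ifs <;> simp [rB]
  | t | s | d => rfl

theorem isBPolicy_pi0 (hn : 1 ≤ n) : IsBPolicy n (pi0 n) := by
  intro u hu
  cases u with
  | a i | b i => simp [pi0, BEdge, hu.1, hu.2]
  | t => simp [pi0, BEdge, hn]
  | s | d => simp [pi0, BEdge]

theorem isUnichainPolicy_pi0 (hn : 1 ≤ n) : IsUnichainPolicy n (pi0 n) where
  isBPolicy := isBPolicy_pi0 hn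
  reaches := (isBPolicy_pi0 hn).bWeakUnichain_of_le 0 fun _ _ => by simp [reward_pi0]

end UnichainPolicies

/-! ### Bland's switch and the edge it replaces -/

/-- The improving switch `(v,w)` for `π` with the smallest Bland number. -/
structure IsBlandSwitch (n : ℕ) (π : BV → BV) (v w : BV) : Prop where
  improving : BImproving n π v w
  minimal : ∀ u u', BImproving n π u u' → NB n v w ≤ NB n u u'

section BlandSwitch

variable {n m : ℕ} {π φ : BV → BV} {u v w q : BV}

theorem BEdge.lt_NB (h : BEdge n v w) (hvt : v ≠ BV.t) : n < NB n v w := by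
  cases h.view <;> first | contradiction | (simp only [NB]; omega)

theorem BImproving.ne_s (h : BImproving n π v w) : v ≠ BV.s := by
  rintro rfl
  obtain rfl := h.1.eq_s
  simpa [zB, rB] using h.2

namespace IsBlandSwitch

theorem zB_nonpos_of_NB_lt (hb : IsBlandSwitch n π v w) (h : BEdge n u q)
    (hlt : NB n u q < NB n v w) : zB n π u q ≤ 0 := by
  by_contra! hpos
  exact hlt.not_ge (hb.minimal u q ⟨h, hpos⟩)

theorem zB_t_nonpos (hb : IsBlandSwitch n π v w) (hvt : v ≠ BV.t) (h : BEdge n BV.t q) :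
    zB n π BV.t q ≤ 0 := by
  refine hb.zB_nonpos_of_NB_lt h ?_
  cases h.view with
  | travel _ hi => exact hi.trans_lt (hb.improving.1.lt_NB hvt)

theorem ne_policy (hb : IsBlandSwitch n π v w) (hπ : IsUnichainPolicy n π) : w ≠ π v := by
  rintro rfl
  exact hb.improving.2.ne' (hπ.zB_self hb.improving.1.isBVertex_left)

theorem zB_le_of_bypass (hb : IsBlandSwitch n π v w) (hπ : IsUnichainPolicy n π)
    (h : BEdge n u q) (hut : u ≠ BV.t) (huv : NV n u < NV n v) (hvq : NV n v < NV n q) :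
    zB n π v q ≤ zB n π v w := by
  have hv := hb.improving.1.isBVertex_left
  rcases h.NB_lt_of_bypass hut hb.improving.1 (hπ.isBPolicy v hv) (hb.ne_policy hπ) huv hvq with
    rfl | rfl | hlt
  · rfl
  · exact (hπ.zB_self hv).trans_le hb.improving.2.le
  · exact (hb.zB_nonpos_of_NB_lt (h.edge_of_bypass hut hv huv hvq) hlt).trans hb.improving.2.le

end IsBlandSwitch

namespace IsUnichainPolicy

/-- The alternatives are that the path of `π` from `u` avoids `t`, so that it stays above `u`, and
that it visits `t`. The sum on the left is the value of following `(u, π u)` and then `φ`. -/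
theorem BVal_add_zB_of_agree_above (hπ : IsUnichainPolicy n π) (hφ : IsUnichainPolicy n φ)
    (hagree : ∀ u, IsBVertex n u → m < NV n u → φ u = π u) (hu : IsBVertex n u)
    (hmu : m ≤ NV n u) :
    BVal n φ u + zB n φ u (π u) = BVal n π u ∨
      BVal n φ u + zB n φ u (π u) - BVal n φ BV.t = BVal n π u - BVal n π BV.t ∧
        BVal n π u + pot n u < BVal n π BV.t + pot n BV.t := by
  induction u, hu using hπ.induction with
  | sink => simp [zB, hπ.apply_s, rB, BVal_s]
  | step u hu hus ih =>
    have hval := hπ.BVal_eq hu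
    have hpot := hπ.BVal_add_pot_lt hu hus
    rcases eq_or_ne (π u) BV.t with ht | ht
    · right
      simp only [ht, zB] at hval hpot ⊢
      exact ⟨by linarith, hpot⟩
    · have hlt := (hπ.isBPolicy u hu).NV_lt hus ht
      have hπu := hπ.isBVertex hu
      have hzero : zB n φ (π u) (π (π u)) = 0 := by
        rw [← hagree _ hπu (hmu.trans_lt hlt), hφ.zB_self hπu]
      rw [hzero] at ih
      rw [zB]
      rcases ih (hmu.trans hlt.le) with h | ⟨h, h'⟩
      · exact .inl (by linarith)
      · exact .inr ⟨by linarith, by linarith⟩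

theorem exists_crossing (hφ : IsUnichainPolicy n φ) (hm : m < NV n BV.s) (hu : IsBVertex n u)
    (hum : NV n u ≤ m) :
    ∃ u', IsBVertex n u' ∧ NV n u' ≤ m ∧ m < NV n (φ u') ∧
      BVal n φ u + pot n u ≤ BVal n φ u' + pot n u' := by
  induction u, hu using hφ.induction with
  | sink => exact absurd hm hum.not_gt
  | step u hu hus ih =>
    rcases lt_or_ge m (NV n (φ u)) with hlt | hge
    · exact ⟨u, hu, hum, hlt, le_rfl⟩
    · obtain ⟨u', hu', hle, hlt, hpot⟩ := ih hge
      exact ⟨u', hu', hle, hlt, (hφ.BVal_add_pot_lt hu hus).le.trans hpot⟩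

end IsUnichainPolicy

namespace IsBlandSwitch

theorem BVal_t_le (hb : IsBlandSwitch n π v w) (hπ : IsUnichainPolicy n π)
    (hφ : IsUnichainPolicy n φ)
    (hagree : ∀ u, IsBVertex n u → NV n v < NV n u → φ u = π u)
    (hval : BVal n π v + zB n π v w ≤ BVal n φ v) :
    BVal n φ BV.t ≤ BVal n π BV.t ∨ BVal n φ BV.t + pot n BV.t ≤ BVal n φ v + pot n v := by
  have hv := hb.improving.1.isBVertex_left
  have ht : IsBVertex n BV.t := trivial
  have htv : NV n BV.t ≤ NV n v := by
    cases v <;> simp only [NV, IsBVertex] at hv ⊢ <;> omega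
  obtain ⟨u, hu, huv, hvq, hpot⟩ := hφ.exists_crossing (NV_lt_NV_s hv hb.improving.ne_s) ht htv
  obtain rfl | hne := eq_or_ne u v
  · exact .inr hpot
  have huv := huv.lt_of_ne fun h => hne (NV_inj hu hv h)
  have hus : u ≠ BV.s := by
    rintro rfl
    exact (huv.trans (NV_lt_NV_s hv hb.improving.ne_s)).false
  have hq := hφ.isBVertex hu
  have hval_u := hφ.BVal_eq hu
  -- The path of `φ` from `t` to `φ u` rules out that the one of `π` from `φ u` returns to `t`.
  have hval_q : BVal n φ (φ u) = BVal n π (φ u) := by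
    have hzero : zB n φ (φ u) (π (φ u)) = 0 := by rw [← hagree _ hq hvq, hφ.zB_self hq]
    have hpot_u := hφ.BVal_add_pot_lt hu hus
    rcases hπ.BVal_add_zB_of_agree_above hφ hagree hq hvq.le with h | ⟨h, h'⟩ <;> linarith
  obtain rfl | hut := eq_or_ne u BV.t
  · left
    have hvt : v ≠ BV.t := by
      rintro rfl
      exact huv.false
    have hz := hb.zB_t_nonpos hvt (hφ.isBPolicy _ ht)
    rw [zB] at hz
    linarith
  · right
    have hz := hb.zB_le_of_bypass hπ (hφ.isBPolicy u hu) hut huv hvq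
    have hpot' := (hφ.isBPolicy u hu).reward_add_pot_le_of_bypass hut hv huv hvq
    rw [zB] at hz
    linarith

theorem zB_old_neg (hb : IsBlandSwitch n π v w) (hπ : IsUnichainPolicy n π)
    (hφ : IsUnichainPolicy n φ)
    (hagree : ∀ u, IsBVertex n u → NV n v < NV n u → φ u = π u)
    (hval : BVal n π v + zB n π v w ≤ BVal n φ v) : zB n φ v (π v) < 0 := by
  have hv := hb.improving.1.isBVertex_left
  have hpos := hb.improving.2
  rcases hπ.BVal_add_zB_of_agree_above hφ hagree hv le_rfl with h | ⟨h, h'⟩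
  · linarith
  · rcases hb.BVal_t_le hπ hφ hagree hval with ht | ht <;> linarith

end IsBlandSwitch

end BlandSwitch

/-! ### Values and reduced costs in `𝔇_n` -/

section DEdges

variable {n : ℕ} {u w : BV} {x y : DV}

theorem IsDAgent.isDVertex (h : IsDAgent n x) : IsDVertex n x := by
  cases x with
  | y => exact h.elim
  | _ => exact h

theorem DEdge.isDAgent_left (h : DEdge n x y) : IsDAgent n x := by
  rcases h with ⟨u, w, h, ⟨rfl, -⟩ | ⟨rfl, -⟩ | ⟨rfl, -⟩ | ⟨rfl, -⟩⟩ | ⟨rfl, -⟩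
  exacts [h.1.isBVertex_left, h, h, h, trivial]

theorem DEdge.isDVertex_right (h : DEdge n x y) : IsDVertex n y := by
  rcases h with ⟨u, w, h, ⟨-, rfl⟩ | ⟨-, rfl⟩ | ⟨-, rfl⟩ | ⟨-, rfl⟩⟩ | ⟨-, rfl⟩
  exacts [h, h.1.isBVertex_left, h, h.1.isBVertex_right, trivial]

theorem DEdge.eq_of_x (h : DEdge n (DV.x u w) y) : y = DV.base u ∨ y = DV.y u w := by
  simp only [DEdge, reduceCtorEq, false_and, DV.x.injEq, false_or, or_false] at h
  obtain ⟨_, _, -, ⟨⟨rfl, rfl⟩, rfl⟩ | ⟨⟨rfl, rfl⟩, rfl⟩⟩ := h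
  exacts [.inl rfl, .inr rfl]

theorem DEdge.eq_of_z (h : DEdge n (DV.z u w) y) : y = DV.base w := by
  simp only [DEdge, reduceCtorEq, false_and, DV.z.injEq, false_or, or_false] at h
  obtain ⟨_, _, -, ⟨rfl, rfl⟩, rfl⟩ := h
  rfl

theorem DEdge.eq_of_sink (h : DEdge n (DV.base BV.s) y) : y = DV.base BV.s := by
  simp only [DEdge, reduceCtorEq, false_and, DV.base.injEq, or_false, true_and] at h
  obtain ⟨u, w, hpair, rfl, -⟩ | h := h
  · exact absurd rfl hpair.2
  · exact h

theorem IsDPolicy.update {ψ : DV → DV} (hψ : IsDPolicy n ψ) (h : DEdge n x y) :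
    IsDPolicy n (Function.update ψ x y) := by
  intro x' hx'
  rcases eq_or_ne x' x with rfl | hne
  · rwa [Function.update_self]
  · rw [Function.update_of_ne hne]
    exact hψ x' hx'

theorem IsDVal.congr {p : BV → ℚ} {ψ : DV → DV} {V W : DV → ℚ} (hV : IsDVal n p ψ V)
    (hψ : IsDPolicy n ψ) (h : ∀ x, IsDVertex n x → W x = V x) : IsDVal n p ψ W := by
  refine ⟨(h (DV.base BV.s) trivial).trans hV.1, fun x hx => ?_, fun u w hpair => ?_⟩
  · rw [h x hx.isDVertex, h _ (hψ x hx).isDVertex_right, hV.2.1 x hx]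
  · rw [h (DV.y u w) hpair, h (DV.z u w) hpair, h (DV.base u) hpair.1.isBVertex_left,
      hV.2.2 u w hpair]

end DEdges

/-- The policy `ψ` for `𝔇_n` realizes the weak unichain policy `φ` for `𝔅_n`: every vertex
`u ≠ s` enters the gadget of `(u, φ u)`, which is traversed. In contrast to an oriented vertex,
`ψ` may also traverse gadgets that it does not enter. -/
structure Realizes (n : ℕ) (ψ : DV → DV) (φ : BV → BV) : Prop where
  unichain : IsUnichainPolicy n φ
  isDPolicy : IsDPolicy n ψ
  enters : ∀ u, IsBVertex n u → u ≠ BV.s → ψ (DV.base u) = DV.x u (φ u)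
  traversed : ∀ u, IsBVertex n u → u ≠ BV.s → ψ (DV.x u (φ u)) = DV.y u (φ u)

/-- The values of a policy `ψ` for `𝔇_n` that realizes `φ`, on the vertices of `𝔇_n`. -/
noncomputable def gadgetVal (n : ℕ) (p : BV → ℚ) (ψ : DV → DV) (φ : BV → BV) : DV → ℚ
  | DV.base u => BVal n φ u
  | DV.x u w =>
    if ψ (DV.x u w) = DV.y u w then BVal n φ u + p u * zB n φ u w else BVal n φ u
  | DV.y u w => BVal n φ u + p u * zB n φ u w
  | DV.z u w => rB n u w + BVal n φ w

namespace Realizes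

variable {n : ℕ} {p : BV → ℚ} {ψ : DV → DV} {φ : BV → BV} {u w : BV} {x : DV}

theorem sink (h : Realizes n ψ φ) : ψ (DV.base BV.s) = DV.base BV.s :=
  (h.isDPolicy (DV.base BV.s) trivial).eq_of_sink

theorem isDVal_gadgetVal (h : Realizes n ψ φ) : IsDVal n p ψ (gadgetVal n p ψ φ) := by
  refine ⟨BVal_s, fun x hx => ?_, fun u w _ => ?_⟩
  · cases x with
    | base u =>
      rcases eq_or_ne u BV.s with rfl | hus
      · simp [h.sink, rD]
      · simp [h.enters u hx hus, h.traversed u hx hus, rD, gadgetVal, h.unichain.zB_self hx]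
    | x u w => rcases (h.isDPolicy (DV.x u w) hx).eq_of_x with hq | hq <;> simp [hq, rD, gadgetVal]
    | y u w => exact hx.elim
    | z u w => simp [(h.isDPolicy (DV.z u w) hx).eq_of_z, rD, gadgetVal]
  · simp only [gadgetVal, zB]
    ring

theorem isDVal_base_eq (h : Realizes n ψ φ) (hp : ∀ u, IsBVertex n u → u ≠ BV.s → 0 < p u)
    {V : DV → ℚ} (hV : IsDVal n p ψ V) (hu : IsBVertex n u) : V (DV.base u) = BVal n φ u := by
  obtain ⟨hV_s, hV_agent, hV_y⟩ := hV
  induction u, hu using h.unichain.induction with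
  | sink => rw [hV_s, BVal_s]
  | step u hu hus ih =>
    have hpair : DEdgePair n u (φ u) := ⟨h.unichain.isBPolicy u hu, hus⟩
    have hbase := hV_agent (DV.base u) hu
    have hx := hV_agent (DV.x u (φ u)) hpair
    have hz := hV_agent (DV.z u (φ u)) hpair
    rw [h.enters u hu hus] at hbase
    rw [h.traversed u hu hus, hV_y u _ hpair] at hx
    rw [(h.isDPolicy (DV.z u (φ u)) hpair).eq_of_z] at hz
    simp only [rD, if_true] at hbase hx hz
    have hzero : p u * (V (DV.z u (φ u)) - V (DV.base u)) = 0 := by linarith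
    have := (mul_eq_zero.mp hzero).resolve_left (hp u hu hus).ne'
    linarith [h.unichain.BVal_eq hu]

theorem isDVal_eq_gadgetVal (h : Realizes n ψ φ)
    (hp : ∀ u, IsBVertex n u → u ≠ BV.s → 0 < p u) {V : DV → ℚ} (hV : IsDVal n p ψ V)
    (hx : IsDVertex n x) : V x = gadgetVal n p ψ φ x := by
  have base_eq {u : BV} (hu : IsBVertex n u) : V (DV.base u) = BVal n φ u :=
    h.isDVal_base_eq hp hV hu
  have z_eq {u w : BV} (hpair : DEdgePair n u w) : V (DV.z u w) = rB n u w + BVal n φ w := by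
    rw [hV.2.1 (DV.z u w) hpair, (h.isDPolicy (DV.z u w) hpair).eq_of_z,
      base_eq hpair.1.isBVertex_right]
    simp [rD]
  have y_eq {u w : BV} (hpair : DEdgePair n u w) :
      V (DV.y u w) = BVal n φ u + p u * zB n φ u w := by
    rw [hV.2.2 u w hpair, z_eq hpair, base_eq hpair.1.isBVertex_left, zB]
    ring
  cases x with
  | base u => exact base_eq hx
  | x u w =>
    rw [hV.2.1 (DV.x u w) hx]
    rcases (h.isDPolicy (DV.x u w) hx).eq_of_x with hq | hq
    · simp [hq, rD, gadgetVal, base_eq hx.1.isBVertex_left]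
    · simp [hq, rD, gadgetVal, y_eq hx]
  | y u w => exact y_eq hx
  | z u w => exact z_eq hx

theorem DVal_eq_gadgetVal (h : Realizes n ψ φ) (hp : ∀ u, IsBVertex n u → u ≠ BV.s → 0 < p u)
    (hx : IsDVertex n x) : DVal n p ψ x = gadgetVal n p ψ φ x := by
  have hex : ∃! V : DV → ℚ, IsDVal n p ψ V ∧ ∀ x, ¬ IsDVertex n x → V x = 0 := by
    classical
    refine ⟨fun x => if IsDVertex n x then gadgetVal n p ψ φ x else 0,
      ⟨h.isDVal_gadgetVal.congr h.isDPolicy fun x hx => if_pos hx, fun x hx => if_neg hx⟩, ?_⟩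
    rintro V ⟨hV, hV_zero⟩
    funext x
    split_ifs with hx
    · exact h.isDVal_eq_gadgetVal hp hV hx
    · exact hV_zero x hx
  rw [DVal, dif_pos hex]
  exact h.isDVal_eq_gadgetVal hp hex.exists.choose_spec.1 hx

theorem zD_enter (h : Realizes n ψ φ) (hp : ∀ u, IsBVertex n u → u ≠ BV.s → 0 < p u)
    (hpair : DEdgePair n u w) :
    zD n p ψ (DV.base u) (DV.x u w) =
      if ψ (DV.x u w) = DV.y u w then p u * zB n φ u w else 0 := by
  rw [zD, h.DVal_eq_gadgetVal hp (x := DV.x u w) hpair,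
    h.DVal_eq_gadgetVal hp (x := DV.base u) hpair.1.isBVertex_left]
  simp only [rD, gadgetVal]
  split_ifs <;> ring

theorem zD_return (h : Realizes n ψ φ) (hp : ∀ u, IsBVertex n u → u ≠ BV.s → 0 < p u)
    (hpair : DEdgePair n u w) :
    zD n p ψ (DV.x u w) (DV.base u) =
      if ψ (DV.x u w) = DV.y u w then -(p u * zB n φ u w) else 0 := by
  rw [zD, h.DVal_eq_gadgetVal hp (x := DV.x u w) hpair,
    h.DVal_eq_gadgetVal hp (x := DV.base u) hpair.1.isBVertex_left]
  simp only [rD, gadgetVal]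
  split_ifs <;> ring

theorem zD_self (h : Realizes n ψ φ) (hp : ∀ u, IsBVertex n u → u ≠ BV.s → 0 < p u)
    (hx : IsDAgent n x) : zD n p ψ x (ψ x) = 0 := by
  rw [zD, h.DVal_eq_gadgetVal hp hx.isDVertex,
    h.DVal_eq_gadgetVal hp (h.isDPolicy x hx).isDVertex_right, h.isDVal_gadgetVal.2.1 x hx]
  ring

theorem improving_return_iff (h : Realizes n ψ φ)
    (hp : ∀ u, IsBVertex n u → u ≠ BV.s → 0 < p u) (hpair : DEdgePair n u w) :
    DImproving n p ψ (DV.x u w) (DV.base u) ↔ ψ (DV.x u w) = DV.y u w ∧ zB n φ u w < 0 := by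
  have hpu := hp u hpair.1.isBVertex_left hpair.2
  have hedge : DEdge n (DV.x u w) (DV.base u) := .inl ⟨u, w, hpair, .inr (.inl ⟨rfl, rfl⟩)⟩
  rw [DImproving, h.zD_return hp hpair]
  split_ifs with ht <;> simp [hedge, ht, mul_neg_iff, hpu, hpu.not_gt]

theorem improving_enter_iff (h : Realizes n ψ φ)
    (hp : ∀ u, IsBVertex n u → u ≠ BV.s → 0 < p u) (hpair : DEdgePair n u w) :
    DImproving n p ψ (DV.base u) (DV.x u w) ↔ ψ (DV.x u w) = DV.y u w ∧ BImproving n φ u w := by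
  have hpu := hp u hpair.1.isBVertex_left hpair.2
  have hedge : DEdge n (DV.base u) (DV.x u w) := .inl ⟨u, w, hpair, .inl ⟨rfl, rfl⟩⟩
  rw [DImproving, BImproving, h.zD_enter hp hpair]
  split_ifs with ht <;> simp [hedge, hpair.1, ht, hpu]

end Realizes

/-! ### Runs of policy iteration on `𝔇_n` -/

namespace Realizes

variable {n : ℕ} {ψ : DV → DV} {φ : BV → BV} {u w : BV} {y : DV}

theorem twin (hφ : IsUnichainPolicy n φ) : Realizes n (twin φ) φ where
  unichain := hφ
  isDPolicy x hx := by
    cases x with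
    | base u =>
      rcases eq_or_ne u BV.s with rfl | hus
      · exact .inr ⟨rfl, rfl⟩
      · exact .inl ⟨u, φ u, ⟨hφ.isBPolicy u hx, hus⟩, .inl ⟨rfl, if_neg hus⟩⟩
    | x u w =>
      refine .inl ⟨u, w, hx, ?_⟩
      by_cases hw : w = φ u
      · exact .inr (.inr (.inl ⟨rfl, if_pos hw⟩))
      · exact .inr (.inl ⟨rfl, if_neg hw⟩)
    | y u w => exact hx.elim
    | z u w => exact .inl ⟨u, w, hx, .inr (.inr (.inr ⟨rfl, rfl⟩))⟩
  enters _ _ hus := if_neg hus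
  traversed _ _ _ := if_pos rfl

theorem update_enter (h : Realizes n ψ φ) (hedge : DEdge n (DV.base u) (DV.x u w))
    (ht : ψ (DV.x u w) = DV.y u w) (himp : BImproving n φ u w) :
    Realizes n (Function.update ψ (DV.base u) (DV.x u w)) (Function.update φ u w) where
  unichain := h.unichain.update himp
  isDPolicy := h.isDPolicy.update hedge
  enters u' hu' hus := by
    rcases eq_or_ne u' u with rfl | hne
    · simp
    · simp [hne, h.enters u' hu' hus]
  traversed u' hu' hus := by
    rcases eq_or_ne u' u with rfl | hne
    · simp [ht]
    · simp [hne, h.traversed u' hu' hus]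

theorem update_x (h : Realizes n ψ φ) (hedge : DEdge n (DV.x u w) y)
    (hy : w = φ u → y = DV.y u w) : Realizes n (Function.update ψ (DV.x u w) y) φ where
  unichain := h.unichain
  isDPolicy := h.isDPolicy.update hedge
  enters u' hu' hus := by simp [h.enters u' hu' hus]
  traversed u' hu' hus := by
    by_cases heq : DV.x u' (φ u') = DV.x u w
    · obtain ⟨rfl, rfl⟩ := DV.x.inj heq
      rw [Function.update_self, hy rfl]
    · rw [Function.update_of_ne heq, h.traversed u' hu' hus]

end Realizes

/-- What the policies `ψ` occurring in a run after Bland's switch `(v,w)` for `π` have in common,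
where `φ` is the policy for `𝔅_n` that `ψ` realizes. -/
structure RunInvariant (n : ℕ) (π : BV → BV) (v w : BV) (φ : BV → BV) (ψ : DV → DV) : Prop where
  realizes : Realizes n ψ φ
  le_BVal : BVal n π v + zB n π v w ≤ BVal n φ v
  eq_of_traversed : ∀ u w', DEdgePair n u w' → NV n v < NV n u →
    ψ (DV.x u w') = DV.y u w' → w' = π u
  old_traversed : ψ (DV.x v (π v)) = DV.y v (π v)

/-- The policy for `𝔇_n` obtained from the twin policy of `π` by carrying out the switch
`(v,w)`. -/
def switchedTwin (π : BV → BV) (v w : BV) : DV → DV :=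
  Function.update (Function.update (twin π) (DV.x v w) (DV.y v w)) (DV.base v) (DV.x v w)

namespace RunInvariant

variable {n : ℕ} {p : BV → ℚ} {π φ : BV → BV} {ψ ψ' : DV → DV} {v w u w' : BV} {e : DV × DV}

theorem initial (hb : IsBlandSwitch n π v w) (hπ : IsUnichainPolicy n π) :
    RunInvariant n π v w (Function.update π v w) (switchedTwin π v w) where
  realizes := by
    have hpair : DEdgePair n v w := ⟨hb.improving.1, hb.improving.ne_s⟩
    refine ((Realizes.twin hπ).update_x ?_ fun _ => rfl).update_enter ?_ ?_ hb.improving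
    · exact .inl ⟨v, w, hpair, .inr (.inr (.inl ⟨rfl, rfl⟩))⟩
    · exact .inl ⟨v, w, hpair, .inl ⟨rfl, rfl⟩⟩
    · exact Function.update_self ..
  le_BVal := hπ.BVal_add_zB_le_BVal_update hb.improving
  eq_of_traversed u w' _ huv ht := by
    have hne : u ≠ v := fun h => huv.ne' (congrArg (NV n) h)
    simpa [switchedTwin, twin, hne] using ht
  old_traversed := by
    simp [switchedTwin, twin, (hb.ne_policy hπ).symm]

theorem agree_above (h : RunInvariant n π v w φ ψ) (hπ : IsUnichainPolicy n π) (u : BV)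
    (hu : IsBVertex n u) (hvu : NV n v < NV n u) : φ u = π u := by
  rcases eq_or_ne u BV.s with rfl | hus
  · rw [h.realizes.unichain.apply_s, hπ.apply_s]
  · exact h.eq_of_traversed u (φ u) ⟨h.realizes.unichain.isBPolicy u hu, hus⟩ hvu
      (h.realizes.traversed u hu hus)

theorem improving_old (h : RunInvariant n π v w φ ψ) (hb : IsBlandSwitch n π v w)
    (hπ : IsUnichainPolicy n π) (hp : ∀ u, IsBVertex n u → u ≠ BV.s → 0 < p u) :
    DImproving n p ψ (DV.x v (π v)) (DV.base v) := by
  have hpair : DEdgePair n v (π v) :=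
    ⟨hπ.isBPolicy v hb.improving.1.isBVertex_left, hb.improving.ne_s⟩
  exact (h.realizes.improving_return_iff hp hpair).mpr
    ⟨h.old_traversed, hb.zB_old_neg hπ h.realizes.unichain (h.agree_above hπ) h.le_BVal⟩

theorem update_enter (h : RunInvariant n π v w φ ψ) (hv : IsBVertex n v)
    (hp : ∀ u, IsBVertex n u → u ≠ BV.s → 0 < p u) (hpair : DEdgePair n u w')
    (himp : DImproving n p ψ (DV.base u) (DV.x u w')) :
    RunInvariant n π v w (Function.update φ u w')
      (Function.update ψ (DV.base u) (DV.x u w')) := by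
  obtain ⟨ht, himpB⟩ := (h.realizes.improving_enter_iff hp hpair).mp himp
  refine ⟨h.realizes.update_enter himp.1 ht himpB, ?_, ?_, ?_⟩
  · exact h.le_BVal.trans (h.realizes.unichain.BVal_le_BVal_update himpB hv)
  · simpa using h.eq_of_traversed
  · simpa using h.old_traversed

theorem update_return (h : RunInvariant n π v w φ ψ)
    (hp : ∀ u, IsBVertex n u → u ≠ BV.s → 0 < p u) (hpair : DEdgePair n u w')
    (himp : DImproving n p ψ (DV.x u w') (DV.base u)) (hold : DV.x u w' ≠ DV.x v (π v)) :
    RunInvariant n π v w φ (Function.update ψ (DV.x u w') (DV.base u)) := by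
  have hneg := ((h.realizes.improving_return_iff hp hpair).mp himp).2
  refine ⟨h.realizes.update_x himp.1 ?_, h.le_BVal, fun u₁ w₁ hpair₁ hvu ht => ?_, ?_⟩
  · rintro rfl
    exact absurd (h.realizes.unichain.zB_self hpair.1.isBVertex_left) hneg.ne
  · refine h.eq_of_traversed u₁ w₁ hpair₁ hvu ?_
    rcases eq_or_ne (DV.x u₁ w₁) (DV.x u w') with heq | hne
    · simp [heq] at ht
    · rwa [Function.update_of_ne hne] at ht
  · rw [Function.update_of_ne hold.symm, h.old_traversed]

theorem update_traverse (h : RunInvariant n π v w φ ψ)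
    (hedge : DEdge n (DV.x u w') (DV.y u w')) (huv : NV n u ≤ NV n v) :
    RunInvariant n π v w φ (Function.update ψ (DV.x u w') (DV.y u w')) := by
  refine ⟨h.realizes.update_x hedge fun _ => rfl, h.le_BVal, fun u₁ w₁ hpair₁ hvu ht => ?_, ?_⟩
  · have hne : DV.x u₁ w₁ ≠ DV.x u w' := by
      rintro heq
      obtain ⟨rfl, -⟩ := DV.x.inj heq
      exact huv.not_gt hvu
    rw [Function.update_of_ne hne] at ht
    exact h.eq_of_traversed u₁ w₁ hpair₁ hvu ht
  · by_cases heq : DV.x v (π v) = DV.x u w'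
    · obtain ⟨rfl, rfl⟩ := DV.x.inj heq
      exact Function.update_self ..
    · rw [Function.update_of_ne heq, h.old_traversed]

theorem exists_apply (h : RunInvariant n π v w φ ψ) (hv : IsBVertex n v)
    (hp : ∀ u, IsBVertex n u → u ≠ BV.s → 0 < p u) (hstep : DApply n p ψ e ψ')
    (hold : e ≠ (DV.x v (π v), DV.base v))
    (habove : ∀ u w', e = (DV.x u w', DV.y u w') → NV n u ≤ NV n v) :
    ∃ φ', RunInvariant n π v w φ' ψ' := by
  obtain ⟨x, y⟩ := e
  obtain ⟨himp : DImproving n p ψ x y, rfl⟩ := hstep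
  have hne_self : y ≠ ψ x := by
    rintro rfl
    exact himp.2.ne' (h.realizes.zD_self hp himp.1.isDAgent_left)
  rcases id himp.1 with ⟨u, w', hpair, ⟨rfl, rfl⟩ | ⟨rfl, rfl⟩ | ⟨rfl, rfl⟩ | ⟨rfl, rfl⟩⟩ |
    ⟨rfl, rfl⟩
  · exact ⟨_, h.update_enter hv hp hpair himp⟩
  · refine ⟨φ, h.update_return hp hpair himp fun heq => hold ?_⟩
    obtain ⟨rfl, rfl⟩ := DV.x.inj heq
    rfl
  · exact ⟨φ, h.update_traverse himp.1 (habove u w' rfl)⟩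
  · exact absurd (h.realizes.isDPolicy (DV.z u w') hpair).eq_of_z.symm hne_self
  · exact absurd h.realizes.sink.symm hne_self

theorem exists_of_run (hb : IsBlandSwitch n π v w) (hπ : IsUnichainPolicy n π)
    (hp : ∀ u, IsBVertex n u → u ≠ BV.s → 0 < p u) {f : ℕ → DV → DV} {g : ℕ → DV × DV} {k : ℕ}
    (hf : f 0 = switchedTwin π v w)
    (hrun : ∀ j < k, DApply n p (f j) (g j) (f (j + 1)))
    (havoid : ∀ j < k, g j ≠ (DV.x v (π v), DV.base v) ∧
      ∀ u w', g j = (DV.x u w', DV.y u w') → NV n u ≤ NV n v) :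
    ∃ φ, RunInvariant n π v w φ (f k) := by
  induction k with
  | zero => exact ⟨_, hf ▸ initial hb hπ⟩
  | succ k ih =>
    obtain ⟨φ, h⟩ := ih (fun j hj => hrun j (hj.trans k.lt_succ_self))
      fun j hj => havoid j (hj.trans k.lt_succ_self)
    obtain ⟨hold, habove⟩ := havoid k k.lt_succ_self
    exact h.exists_apply hb.improving.1.isBVertex_left hp (hrun k k.lt_succ_self) hold habove

end RunInvariant

theorem stmt15_general (n : ℕ) (p : BV → ℚ) (hp : ∀ v, IsBVertex n v → v ≠ BV.s → 0 < p v)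
    (π : BV → BV) (hπ : IsBPolicy n π) (hreach : BWeakUnichain n π)
    (v w : BV) (himp : BImproving n π v w)
    (hmin : ∀ u u', BImproving n π u u' → NB n v w ≤ NB n u u') :
    DImproving n p
      (Function.update (Function.update (twin π) (DV.x v w) (DV.y v w)) (DV.base v) (DV.x v w))
      (DV.x v (π v)) (DV.base v) ∧
    ∀ (f : ℕ → (DV → DV)) (g : ℕ → DV × DV) (k : ℕ),
      f 0 = Function.update (Function.update (twin π) (DV.x v w) (DV.y v w))
        (DV.base v) (DV.x v w) →
      (∀ j < k, DApply n p (f j) (g j) (f (j + 1))) →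
      (∀ j < k, g j ≠ (DV.x v (π v), DV.base v) ∧
        ∀ u w', g j = (DV.x u w', DV.y u w') → NV n u ≤ NV n v) →
      DImproving n p (f k) (DV.x v (π v)) (DV.base v) := by
  have hb : IsBlandSwitch n π v w := ⟨himp, hmin⟩
  have hunichain : IsUnichainPolicy n π := ⟨hπ, hreach⟩
  refine ⟨(RunInvariant.initial hb hunichain).improving_old hb hunichain hp, ?_⟩
  intro f g k hf hrun havoid
  obtain ⟨φ, h⟩ := RunInvariant.exists_of_run hb hunichain hp hf hrun havoid
  exact h.improving_old hb hunichain hp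

/-- Let `(v,w)` be the improving switch that Bland's policy iteration applies to a visited
policy `π` for `𝔅_n`, and let `π̄'` result from the twin policy of `π` by applying
`(x v w, y v w)` and then `(v, x v w)`. Then `(x_{v,π(v)}, v)` is improving for `π̄'` and,
in every run of policy iteration on `𝔇_n` starting at `π̄'`, it remains improving until it
is applied or until a switch `(x u ·, y u ·)` with `𝒩_V(u) > 𝒩_V(v)` is applied. -/
theorem stmt15 (n : ℕ) (hn : 1 ≤ n) (p : BV → ℚ)
    (hp : ∀ v, IsBVertex n v → v ≠ BV.s → 0 < p v ∧ p v ≤ 1)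
    (π : BV → BV) (hvis : BlandReaches n (NB n) (pi0 n) π)
    (v w : BV) (himp : BImproving n π v w)
    (hmin : ∀ u u', BImproving n π u u' → NB n v w ≤ NB n u u') :
    DImproving n p
      (Function.update (Function.update (twin π) (DV.x v w) (DV.y v w)) (DV.base v) (DV.x v w))
      (DV.x v (π v)) (DV.base v) ∧
    ∀ (f : ℕ → (DV → DV)) (g : ℕ → DV × DV) (k : ℕ),
      f 0 = Function.update (Function.update (twin π) (DV.x v w) (DV.y v w))
        (DV.base v) (DV.x v w) →
      (∀ j < k, DApply n p (f j) (g j) (f (j + 1))) →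
      (∀ j < k, g j ≠ (DV.x v (π v), DV.base v) ∧
        ∀ u w', g j = (DV.x u w', DV.y u w') → NV n u ≤ NV n v) →
      DImproving n p (f k) (DV.x v (π v)) (DV.base v) := by
  have hπ := (isUnichainPolicy_pi0 hn).of_blandReaches hvis
  exact stmt15_general n p (fun u hu hus => (hp u hu hus).1) π hπ.isBPolicy hπ.reaches v w
    himp hmin
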